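/- arXiv:1903.00868 — 2 statements merged into one kernel-verified Lean document; each statement's English description precedes it below -/
import Mathlib

section
/- Gauss–Jacobi cubature for the Jacobi unitary ensemble: for α, β > −1 and every f ∈ ℙ^{(2m+1,n)}, (1/n!) ∫_{−1}^1⋯∫_{−1}^1 f(x) Π_{j=1}^n (1−x_j)^α(1+x_j)^β Π_{1≤j<k≤n}(x_j−x_k)² dx_1⋯dx_n = Σ_{λ̂ ∈ Λ^{(m,n)}} f(x_λ̂^{(m,n)}) W_λ̂, where W_λ̂ = ((2m+2n+1+α+β)/((m+n)(m+n+1+α+β)))^n Π_{j=1}^n (1−(x^{(m+n)}_{λ̂_j+n−j})²)^{−1} (p^{(α+1,β+1)}_{m+n−1}(x^{(m+n)}_{λ̂_j+n−j}))^{−2} · Π_{1≤j<k≤n}(x^{(m+n)}_{λ̂_j+n−j} − x^{(m+n)}_{λ̂_k+n−k})². -/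
open MeasureTheory Real Finset

noncomputable section

/-- Vandermonde product `∏_{j<k} (x_j - x_k)`. -/
def vand (n : ℕ) (x : Fin n → ℝ) : ℝ :=
  ∏ j : Fin n, ∏ k ∈ Finset.univ.filter (fun k => j < k), (x j - x k)

/-- The fundamental alcove `Λ^{(m,n)}` : decreasing sequences with entries ≤ m. -/
def Lam (m n : ℕ) : Finset (Fin n → ℕ) :=
  (Fintype.piFinset fun _ => Finset.range (m + 1)).filter
    fun lam => ∀ i j : Fin n, i ≤ j → lam j ≤ lam i

/-- The node `x^{(m,n)}_λ̂` with `j`-th component `x^{(m+n)}_{λ̂_j + n - j}`. -/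
def node (n : ℕ) (xr : ℕ → ℝ) (lh : Fin n → ℕ) : Fin n → ℝ :=
  fun j => xr (lh j + (n - 1 - (j : ℕ)))

/-- The symmetric monomial `M_λ(x)`. -/
def msym (n : ℕ) (lam : Fin n → ℕ) : (Fin n → ℝ) → ℝ := fun x =>
  ∑ mu ∈ Finset.univ.image (fun σ : Equiv.Perm (Fin n) => lam ∘ σ), ∏ j : Fin n, x j ^ mu j

/-- The space `ℙ^{(m,n)}`: span of the symmetric monomials `M_λ`, `λ ∈ Λ^{(m,n)}`. -/
def pSpace (m n : ℕ) : Submodule ℝ ((Fin n → ℝ) → ℝ) :=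
  Submodule.span ℝ (msym n '' (Lam m n : Set (Fin n → ℕ)))

open Polynomial in
/-- orthogonality, lower degree -/
theorem aux_orth_low (L : ℝ[X] →ₗ[ℝ] ℝ) (p : ℕ → ℝ[X]) (hdeg : ∀ l, (p l).degree = l)
    (horth : ∀ l k, L (p l * p k) = if l = k then 1 else 0) (N : ℕ) :
    ∀ d ≤ N, ∀ g : ℝ[X], g.degree < d → L (p N * g) = 0 := by
  intro d
  induction d with
  | zero =>
    intro _ g hg
    have : g = 0 := by
      rw [← degree_eq_bot]; exact Nat.WithBot.lt_zero_iff.mp (by simpa using hg)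
    simp [this]
  | succ d ih =>
    intro hd g hg
    have hnd : (p d).natDegree = d := natDegree_eq_of_degree_eq_some (hdeg d)
    have hlc : (p d).coeff d ≠ 0 := by
      have h0 : p d ≠ 0 := by
        intro h; have := hdeg d; rw [h, degree_zero] at this; simp at this
      have := leadingCoeff_ne_zero.mpr h0
      rwa [leadingCoeff, hnd] at this
    have key : (g - (g.coeff d / (p d).coeff d) • p d).degree < d := by
      rw [degree_lt_iff_coeff_zero]
      intro k hk
      rcases hk.eq_or_lt with rfl | hk
      · simp; field_simp; simp
      · rw [coeff_sub, coeff_smul, coeff_eq_zero_of_degree_lt (lt_of_lt_of_le hg (by exact_mod_cast hk)),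
          coeff_eq_zero_of_natDegree_lt (p := p d) (n := k) (by omega)]
        simp
    have h1 := ih (by omega) _ key
    have h2 := horth N d
    rw [if_neg (by omega)] at h2
    rw [mul_sub, mul_smul_comm, map_sub, map_smul, h2] at h1
    simpa using h1

open Polynomial in
theorem aux_orth_top (L : ℝ[X] →ₗ[ℝ] ℝ) (p : ℕ → ℝ[X]) (hdeg : ∀ l, (p l).degree = l)
    (horth : ∀ l k, L (p l * p k) = if l = k then 1 else 0) (N : ℕ) (g : ℝ[X])
    (hg : g.natDegree ≤ N) : L (p N * g) = g.coeff N / (p N).coeff N := by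
  have hnd : (p N).natDegree = N := natDegree_eq_of_degree_eq_some (hdeg N)
  have hlc : (p N).coeff N ≠ 0 := by
    have h0 : p N ≠ 0 := by
      intro h; have := hdeg N; rw [h, degree_zero] at this; simp at this
    have := leadingCoeff_ne_zero.mpr h0
    rwa [leadingCoeff, hnd] at this
  have key : (g - (g.coeff N / (p N).coeff N) • p N).degree < N := by
    rw [degree_lt_iff_coeff_zero]
    intro k hk
    rcases hk.eq_or_lt with rfl | hk
    · simp; field_simp; simp
    · rw [coeff_sub, coeff_smul, coeff_eq_zero_of_natDegree_lt (n := k) (p := g) (by omega),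
        coeff_eq_zero_of_natDegree_lt (p := p N) (n := k) (by omega)]
      simp
  have h1 := aux_orth_low L p hdeg horth N N le_rfl _ key
  have h2 := horth N N
  rw [if_pos rfl] at h2
  rw [mul_sub, mul_smul_comm, map_sub, map_smul, h2] at h1
  simp only [smul_eq_mul, mul_one] at h1
  linarith

open Polynomial in
/-- `L((1-X²) p_N' g)` for `deg g < N` -/
theorem aux_ibp (L : ℝ[X] →ₗ[ℝ] ℝ) (p : ℕ → ℝ[X]) (hdeg : ∀ l, (p l).degree = l)
    (horth : ∀ l k, L (p l * p k) = if l = k then 1 else 0) (α β : ℝ)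
    (hL : ∀ g : ℝ[X], L ((1 - X ^ 2) * derivative g + (C (β - α) - C (α + β + 2) * X) * g) = 0)
    (M : ℕ) (g : ℝ[X]) (hg : g.natDegree ≤ M) :
    L ((1 - X ^ 2) * derivative (p (M + 1)) * g)
      = (M + 1 + 1 + α + β) * g.coeff M / (p (M + 1)).coeff (M + 1) := by
  set T := (1 - X ^ 2) * derivative g + (C (β - α) - C (α + β + 2) * X) * g with hT
  have h1 := hL (p (M + 1) * g)
  have h2 : (1 - X ^ 2) * derivative (p (M + 1) * g)
      + (C (β - α) - C (α + β + 2) * X) * (p (M + 1) * g)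
      = (1 - X ^ 2) * derivative (p (M + 1)) * g + p (M + 1) * T := by
    rw [hT, derivative_mul]; ring
  rw [h2, map_add] at h1
  have hTdeg : T.natDegree ≤ M + 1 := by
    rw [natDegree_le_iff_coeff_eq_zero]
    intro k hk
    obtain ⟨k, rfl⟩ : ∃ j, k = j + 2 := ⟨k - 2, by omega⟩
    have e : T = derivative g - derivative g * X ^ 2 + C (β - α) * g - C (α + β + 2) * (g * X) := by
      rw [hT]; ring
    have e2 : ∀ j, M < j → g.coeff j = 0 := fun j hj => coeff_eq_zero_of_natDegree_lt (by omega)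
    rw [e]
    simp only [coeff_sub, coeff_add, coeff_C_mul, coeff_mul_X_pow, coeff_derivative]
    rw [show k + 2 = (k + 1) + 1 from rfl, coeff_mul_X]
    rw [e2 (k+1+1+1) (by omega), e2 (k+1+1) (by omega), e2 (k + 1) (by omega)]
    simp
  have hTc : T.coeff (M + 1) = - (M + 1 + 1 + α + β) * g.coeff M := by
    have e : T = derivative g - derivative g * X ^ 2 + C (β - α) * g - C (α + β + 2) * (g * X) := by
      rw [hT]; ring
    have e2 : ∀ j, M < j → g.coeff j = 0 := fun j hj => coeff_eq_zero_of_natDegree_lt (by omega)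
    rw [e]
    simp only [coeff_sub, coeff_add, coeff_C_mul, coeff_mul_X, coeff_derivative, coeff_mul_X_pow']
    rw [e2 (M+1+1) (by omega), e2 (M+1) (by omega)]
    rcases M with _ | M
    · simp; ring
    · simp [show 2 ≤ M + 1 + 1 by omega, show M + 1 + 1 - 2 = M by omega]; ring
  rw [aux_orth_top L p hdeg horth (M + 1) T hTdeg, hTc] at h1
  rw [eq_neg_of_add_eq_zero_left h1]; ring

open Polynomial in
theorem aux_gauss (L : ℝ[X] →ₗ[ℝ] ℝ) (p q : ℕ → ℝ[X]) (hdeg : ∀ l, (p l).degree = l)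
    (horth : ∀ l k, L (p l * p k) = if l = k then 1 else 0)
    (hqdeg : ∀ l, (q l).degree = l)
    (hqorth : ∀ l k, L ((1 - X ^ 2) * (q l * q k)) = if l = k then 1 else 0) (α β : ℝ)
    (hα : -1 < α) (hβ : -1 < β)
    (hL : ∀ g : ℝ[X], L ((1 - X ^ 2) * derivative g + (C (β - α) - C (α + β + 2) * X) * g) = 0)
    (M : ℕ) (x : ℕ → ℝ) 
    (hinj : ∀ k l : ℕ, k < l → l < M + 1 → x k < x l)
    (hroot : ∀ l < M + 1, (p (M + 1)).eval (x l) = 0) (g : ℝ[X]) (hg : g.degree < ((2 * (M + 1) : ℕ) : WithBot ℕ)) :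
    L g = ∑ k ∈ range (M + 1), g.eval (x k) *
      ((2 * (M + 1) + 1 + α + β) / ((M + 1) * (M + 1 + 1 + α + β)) *
        ((1 - x k ^ 2)⁻¹ * (((q M).eval (x k)) ^ 2)⁻¹)) := by
  have hnd : ∀ l, (p l).natDegree = l := fun l => natDegree_eq_of_degree_eq_some (hdeg l)
  have hqnd : ∀ l, (q l).natDegree = l := fun l => natDegree_eq_of_degree_eq_some (hqdeg l)
  have hp0 : ∀ l, p l ≠ 0 := fun l h => by have := hdeg l; rw [h, degree_zero] at this; simp at this
  have hq0 : ∀ l, q l ≠ 0 := fun l h => by have := hqdeg l; rw [h, degree_zero] at this; simp at this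
  have hlc : ∀ l, (p l).coeff l ≠ 0 := fun l => by
    have := leadingCoeff_ne_zero.mpr (hp0 l); rwa [leadingCoeff, hnd] at this
  have hqlc : ∀ l, (q l).coeff l ≠ 0 := fun l => by
    have := leadingCoeff_ne_zero.mpr (hq0 l); rwa [leadingCoeff, hqnd] at this
  set P := p (M + 1) with hP
  -- exactness
  have hinjOn : Set.InjOn x (range (M + 1) : Set ℕ) := by
    intro a ha b hb hab
    simp at ha hb
    rcases lt_trichotomy a b with h | h | h
    · exact absurd hab (hinj a b h (by omega)).ne
    · exact h
    · exact absurd hab (hinj b a h (by omega)).ne'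
  set W : ℕ → ℝ := fun k => L (Lagrange.basis (range (M + 1)) x k) with hW
  have hex : ∀ g : ℝ[X], g.degree < ((2 * (M + 1) : ℕ) : WithBot ℕ) →
      L g = ∑ k ∈ range (M + 1), g.eval (x k) * W k := by
    intro g hg
    have hdiv : P * (g / P) + g % P = g := EuclideanDomain.div_add_mod g P
    have hr : (g % P).degree < (M + 1 : ℕ) := by
      have := degree_mod_lt g (hp0 (M+1)); rwa [hdeg] at this
    have hs : (g / P).degree < (M + 1 : ℕ) := by
      by_cases h0 : g / P = 0
      · rw [h0, degree_zero]; exact WithBot.bot_lt_coe _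
      have hle : P.degree ≤ g.degree := by
        by_contra hlt
        exact h0 ((Polynomial.div_eq_zero_iff (hp0 (M+1))).mpr (not_le.mp hlt))
      have h1 := degree_add_div (hp0 (M+1)) hle
      have h3 : g ≠ 0 := by rintro rfl; simp at h0
      rw [hdeg, degree_eq_natDegree h0, degree_eq_natDegree h3] at h1
      rw [degree_eq_natDegree h3] at hg
      rw [degree_eq_natDegree h0]
      norm_cast at h1 hg ⊢
      omega
    have h1 : L g = L (g % P) := by
      conv_lhs => rw [← hdiv]
      rw [map_add, aux_orth_low L p hdeg horth (M+1) (M+1) le_rfl _ hs, zero_add]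
    have h2 : ∀ k ∈ range (M + 1), (g % P).eval (x k) = g.eval (x k) := by
      intro k hk
      conv_rhs => rw [← hdiv]
      simp [hroot k (by simpa using hk)]
    rw [h1, Lagrange.eq_interpolate hinjOn (f := g % P) (by simpa using hr)]
    rw [Lagrange.interpolate_apply, map_sum]
    apply Finset.sum_congr rfl
    intro k hk
    rw [← smul_eq_C_mul, map_smul, h2 k hk, smul_eq_mul]
  -- derivative
  have hib := aux_ibp L p hdeg horth α β hL M
  set c := (M + 1) * P.coeff (M + 1) / (q M).coeff M with hc
  have hD : derivative P = c • q M := by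
    have hDdeg : (derivative P).natDegree ≤ M := by
      have := natDegree_derivative_le P
      rw [hP, hnd] at this; simpa using this
    by_contra hne
    set r := derivative P - c • q M with hr
    have hr0 : r ≠ 0 := sub_ne_zero.mpr hne
    have hrd : r.natDegree < M := by
      rw [natDegree_lt_iff_degree_lt hr0, degree_lt_iff_coeff_zero]
      intro k hk
      rcases hk.eq_or_lt with rfl | hk
      · have := hqlc M
        simp [hr, coeff_derivative, hc]; field_simp; simp
      · rw [hr, coeff_sub, coeff_smul, coeff_eq_zero_of_natDegree_lt (by omega),
        coeff_eq_zero_of_natDegree_lt (p := q M) (by rw [hqnd]; omega)]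
        simp
    have e1 := aux_orth_top (L ∘ₗ LinearMap.mulLeft ℝ (1 - X ^ 2)) q hqdeg
      (by simpa using hqorth) r.natDegree r le_rfl
    have e2 := hib (q r.natDegree) (by rw [hqnd]; omega)
    rw [coeff_eq_zero_of_natDegree_lt (p := q _) (by rw [hqnd]; omega)] at e2
    have e3 := hqorth M r.natDegree
    rw [if_neg (by omega)] at e3
    have e4 : (1 - X ^ 2) * (q r.natDegree * r) =
        (1 - X ^ 2) * derivative P * q r.natDegree - c • ((1 - X ^ 2) * (q M * q r.natDegree)) := by
      have e5 : ∀ u : ℝ[X], (1 - X ^ 2) * (u * r) =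
          (1 - X ^ 2) * derivative P * u - c • ((1 - X ^ 2) * (q M * u)) := by
        intro u
        rw [hr, smul_eq_C_mul, smul_eq_C_mul]; ring
      exact e5 _
    simp only [LinearMap.comp_apply, LinearMap.mulLeft_apply] at e1
    rw [e4, map_sub, map_smul, e2, e3] at e1
    have e5 := div_ne_zero (leadingCoeff_ne_zero.mpr hr0) (hqlc r.natDegree)
    apply e5
    rw [leadingCoeff, ← e1]; simp
  have hDc : (derivative P).coeff M = (M + 1) * P.coeff (M + 1) := by
    rw [coeff_derivative]; ring
  have hc2 : c ^ 2 = (M + 1) * (M + 1 + 1 + α + β) := by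
    have e1 := hib (derivative P) (by
      have := natDegree_derivative_le P
      rw [hP, hnd] at this; simpa using this)
    rw [hDc, hD] at e1
    have e2 := hqorth M M
    rw [if_pos rfl] at e2
    have e4 : (1 - X ^ 2) * (c • q M) * (c • q M) = (c ^ 2) • ((1 - X ^ 2) * (q M * q M)) := by
      simp only [smul_eq_C_mul, C_pow]; ring
    rw [e4, map_smul, e2, smul_eq_mul, mul_one] at e1
    rw [e1]
    have := hlc (M + 1)
    rw [← hP] at this ⊢
    field_simp
  -- the weights
  have hWk : ∀ k ∈ range (M + 1), W k * ((1 - x k ^ 2) * (derivative P).eval (x k) ^ 2)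
      = 2 * (M + 1) + 1 + α + β := by
    intro k hk
    have hk' : k < M + 1 := by simpa using hk
    obtain ⟨h, hh⟩ := dvd_iff_isRoot.mpr (hroot k hk')
    have hh0 : h ≠ 0 := by rintro rfl; exact hp0 (M+1) (by simpa using hh)
    have hhd : h.natDegree = M := by
      have := hnd (M + 1)
      rw [← hP, hh, natDegree_mul (X_sub_C_ne_zero _) hh0, natDegree_X_sub_C] at this
      omega
    have hhc : h.coeff M = P.coeff (M + 1) := by
      have := congrArg leadingCoeff hh
      rw [leadingCoeff_mul, leadingCoeff_X_sub_C, one_mul, leadingCoeff, leadingCoeff, hhd, hP, hnd] at this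
      exact this.symm
    have hhk : (derivative P).eval (x k) = h.eval (x k) := by
      rw [hh]; simp
    have hhj : ∀ j ∈ range (M + 1), j ≠ k → h.eval (x j) = 0 := by
      intro j hj hjk
      have e := hroot j (by simpa using hj)
      rw [hh, eval_mul] at e
      rcases mul_eq_zero.mp e with e | e
      · simp only [eval_sub, eval_X, eval_C] at e
        exact absurd (hinjOn hj hk (by linarith)) hjk
      · exact e
    set G := (1 - X ^ 2) * derivative P * h with hG
    have hGd : (G + ((M : ℝ) + 1) • (P * P)).degree < ((2 * (M + 1) : ℕ) : WithBot ℕ) := by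
      have hDd : (derivative P).natDegree ≤ M := by
        have := natDegree_derivative_le P
        rw [hP, hnd] at this; simpa using this
      have hPd : P.natDegree ≤ M + 1 := (hnd (M+1)).le
      have hX : (1 - X ^ 2 : ℝ[X]).natDegree ≤ 2 := by compute_degree
      have hX2 : (1 - X ^ 2 : ℝ[X]).coeff 2 = -1 := by
        simp [coeff_one]
      have hA : ((1 - X ^ 2) * derivative P).natDegree ≤ 2 + M := natDegree_mul_le_of_le hX hDd
      have hB : G.natDegree ≤ 2 + M + M := natDegree_mul_le_of_le hA hhd.le
      have hC : (P * P).natDegree ≤ (M + 1) + (M + 1) := natDegree_mul_le_of_le hPd hPd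
      rw [degree_lt_iff_coeff_zero]
      intro j hj
      rcases hj.eq_or_lt with rfl | hj
      · have c1 : G.coeff (2 + M + M) = - ((M + 1) * P.coeff (M + 1)) * P.coeff (M + 1) := by
          rw [hG, coeff_mul_add_eq_of_natDegree_le hA hhd.le, coeff_mul_add_eq_of_natDegree_le hX hDd,
            hX2, hDc, hhc]; ring
        have c2 : (P * P).coeff ((M + 1) + (M + 1)) = P.coeff (M + 1) * P.coeff (M + 1) :=
          coeff_mul_add_eq_of_natDegree_le hPd hPd
        rw [coeff_add, coeff_smul, show 2 * (M + 1) = 2 + M + M by ring, c1,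
          show 2 + M + M = (M + 1) + (M + 1) by ring, c2, smul_eq_mul]; ring
      · rw [coeff_add, coeff_smul, coeff_eq_zero_of_natDegree_lt (by omega),
          coeff_eq_zero_of_natDegree_lt (by omega)]; simp
    have e1 := hex _ hGd
    rw [map_add, map_smul, hib h hhd.le, horth, if_pos rfl, hhc,
      Finset.sum_eq_single_of_mem k hk] at e1
    · rw [mul_div_assoc, div_self (hlc (M + 1))] at e1
      simp only [hG, eval_add, eval_mul, eval_smul, eval_sub, eval_one, eval_pow, eval_X,
        hroot k hk', ← hhk, smul_eq_mul] at e1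
      linear_combination -e1
    · intro j hj hjk
      simp [hG, hhj j hj hjk, hroot j (by simpa using hj)]
  rw [hex g hg]
  apply Finset.sum_congr rfl
  intro k hk
  congr 1
  have e := hWk k hk
  have hM : (0:ℝ) ≤ M := Nat.cast_nonneg M
  have hpos : 0 < 2 * ((M:ℝ) + 1) + 1 + α + β := by linarith
  have hpos2 : 0 < (M:ℝ) + 1 + 1 + α + β := by linarith
  have hne : W k * ((1 - x k ^ 2) * (derivative P).eval (x k) ^ 2) ≠ 0 := by rw [e]; exact hpos.ne'
  rw [hD, eval_smul, smul_eq_mul, mul_pow, hc2] at e hne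
  have n1 : 1 - x k ^ 2 ≠ 0 := by intro h; simp [h] at hne
  have n2 : eval (x k) (q M) ≠ 0 := by intro h; simp [h] at hne
  rw [← e]
  have : (M:ℝ) + 1 ≠ 0 := by positivity
  field_simp

theorem aux_integrable (α β : ℝ)
    (p : ℕ → Polynomial ℝ)
    (hdeg : ∀ l, (p l).degree = l)
    (horth : ∀ l k, (∫ x in Set.Ioo (-1 : ℝ) 1,
        (p l).eval x * (p k).eval x * ((1 - x) ^ α * (1 + x) ^ β))
      = if l = k then 1 else 0) (g : Polynomial ℝ) :
    IntegrableOn (fun x : ℝ => g.eval x * ((1 - x) ^ α * (1 + x) ^ β)) (Set.Ioo (-1) 1) := by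
  have h0 : IntegrableOn (fun x : ℝ => (p 0).eval x * (p 0).eval x * ((1 - x) ^ α * (1 + x) ^ β))
      (Set.Ioo (-1) 1) := by
    by_contra h
    have h1 := horth 0 0
    rw [if_pos rfl, integral_undef h] at h1
    exact zero_ne_one h1
  have hc : p 0 = Polynomial.C ((p 0).coeff 0) :=
    Polynomial.eq_C_of_degree_eq_zero (by simpa using hdeg 0)
  have hc0 : (p 0).coeff 0 ≠ 0 := by
    intro h
    have := hdeg 0
    rw [hc, h] at this
    simp at this
  have h1 : IntegrableOn (fun x : ℝ => (1 - x) ^ α * (1 + x) ^ β) (Set.Ioo (-1) 1) := by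
    have h2 := Integrable.const_mul h0 (((p 0).coeff 0 * (p 0).coeff 0)⁻¹)
    refine h2.congr (Filter.Eventually.of_forall fun x => ?_)
    simp only
    rw [hc]
    simp only [Polynomial.eval_C, Polynomial.coeff_C_zero]
    field_simp
  obtain ⟨b, hb⟩ := (isCompact_Icc (a := (-1 : ℝ)) (b := 1)).exists_bound_of_continuousOn
    g.continuous.continuousOn
  refine Integrable.bdd_mul (c := b) h1 g.continuous.aestronglyMeasurable ?_
  filter_upwards [ae_restrict_mem measurableSet_Ioo] with x hx
  exact hb x (Set.Ioo_subset_Icc_self hx)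

open Polynomial in
theorem aux_stokes (α β : ℝ) (hα : -1 < α) (hβ : -1 < β)
    (hint : ∀ g : Polynomial ℝ,
      IntegrableOn (fun x : ℝ => g.eval x * ((1 - x) ^ α * (1 + x) ^ β)) (Set.Ioo (-1) 1))
    (g : ℝ[X]) :
    ∫ x in Set.Ioo (-1 : ℝ) 1,
      ((1 - X ^ 2) * derivative g + (C (β - α) - C (α + β + 2) * X) * g).eval x
        * ((1 - x) ^ α * (1 + x) ^ β) = 0 := by
  have hle : (-1 : ℝ) ≤ 1 := by norm_num
  have key := intervalIntegral.integral_eq_sub_of_hasDerivAt_of_le (a := (-1 : ℝ)) (b := 1)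
    (f := fun x => g.eval x * ((1 - x) ^ (α + 1) * (1 + x) ^ (β + 1)))
    (f' := fun x => ((1 - X ^ 2) * derivative g + (C (β - α) - C (α + β + 2) * X) * g).eval x
        * ((1 - x) ^ α * (1 + x) ^ β)) hle ?_ ?_ ?_
  · rw [intervalIntegral.integral_of_le hle, integral_Ioc_eq_integral_Ioo] at key
    rw [key]
    have e1 : (0 : ℝ) ^ (α + 1) = 0 := zero_rpow (by linarith)
    have e2 : (0 : ℝ) ^ (β + 1) = 0 := zero_rpow (by linarith)
    norm_num [e1, e2]
  · apply Continuous.continuousOn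
    refine g.continuous.mul (Continuous.mul ?_ ?_)
    · exact (continuous_const.sub continuous_id).rpow_const fun x => Or.inr (by linarith)
    · exact (continuous_const.add continuous_id).rpow_const fun x => Or.inr (by linarith)
  · intro x hx
    have h1 : 0 < 1 - x := by linarith [hx.2]
    have h2 : 0 < 1 + x := by linarith [hx.1]
    have d1 : HasDerivAt (fun x : ℝ => (1 - x) ^ (α + 1)) (-1 * (α + 1) * (1 - x) ^ (α + 1 - 1)) x :=
      ((hasDerivAt_id x).const_sub 1).rpow_const (Or.inl h1.ne')
    have d2 : HasDerivAt (fun x : ℝ => (1 + x) ^ (β + 1)) (1 * (β + 1) * (1 + x) ^ (β + 1 - 1)) x :=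
      ((hasDerivAt_id x).const_add 1).rpow_const (Or.inl h2.ne')
    refine ((g.hasDerivAt x).mul (d1.mul d2)).congr_deriv ?_
    rw [rpow_add_one h1.ne', rpow_add_one h2.ne', add_sub_cancel_right, add_sub_cancel_right]
    simp only [Pi.mul_apply, eval_add, eval_mul, eval_sub, eval_one, eval_pow, eval_X, eval_C]
    rw [rpow_add_one h1.ne', rpow_add_one h2.ne']
    ring
  · rw [intervalIntegrable_iff_integrableOn_Ioo_of_le hle]
    exact hint _

theorem aux_sum_sort (m n : ℕ) (hn : 0 < n) (G : (Fin n → ℕ) → ℝ)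
    (hsym : ∀ κ (σ : Equiv.Perm (Fin n)), G (κ ∘ σ) = G κ)
    (hzero : ∀ κ, ¬ Function.Injective κ → G κ = 0) :
    ∑ κ ∈ Fintype.piFinset (fun _ : Fin n => range (m + n)), G κ
      = n.factorial * ∑ lh ∈ Lam m n, G (fun j => lh j + (n - 1 - (j : ℕ))) := by
  have hanti : ∀ lh ∈ Lam m n, StrictAnti (fun j : Fin n => lh j + (n - 1 - (j : ℕ))) := by
    intro lh hlh i j hij
    have h1 := (Finset.mem_filter.mp hlh).2 i j hij.le
    have h2 : (i : ℕ) < j := hij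
    have := j.2
    simp only
    omega
  have hR : (n.factorial : ℝ) * ∑ lh ∈ Lam m n, G (fun j => lh j + (n - 1 - (j : ℕ)))
      = ∑ x ∈ Lam m n ×ˢ (Finset.univ : Finset (Equiv.Perm (Fin n))),
        G ((fun j => x.1 j + (n - 1 - (j : ℕ))) ∘ x.2) := by
    rw [Finset.sum_product, Finset.mul_sum]
    refine Finset.sum_congr rfl fun lh _ => ?_
    simp only [hsym]
    simp [Fintype.card_perm]
  rw [hR]
  rw [← Finset.sum_filter_of_ne (p := Function.Injective)
    (fun κ _ h => by by_contra h'; exact h (hzero κ h'))]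
  symm
  refine Finset.sum_bij (fun x _ => (fun j => x.1 j + (n - 1 - (j : ℕ))) ∘ x.2) ?_ ?_ ?_ ?_
  · rintro ⟨lh, σ⟩ hx
    have hlh := (Finset.mem_product.mp hx).1
    simp only at hlh
    refine Finset.mem_filter.mpr ⟨?_, (hanti lh hlh).injective.comp σ.injective⟩
    rw [Fintype.mem_piFinset]
    intro i
    have := Fintype.mem_piFinset.mp (Finset.mem_filter.mp hlh).1 (σ i)
    simp only [Finset.mem_range, Function.comp] at this ⊢
    omega
  · rintro ⟨lh, σ⟩ hx ⟨lh', σ'⟩ hx' heq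
    have hlh := (Finset.mem_product.mp hx).1
    have hlh' := (Finset.mem_product.mp hx').1
    simp only at hlh hlh' heq
    have hr : (fun j : Fin n => lh j + (n - 1 - (j : ℕ)))
        = (fun j : Fin n => lh' j + (n - 1 - (j : ℕ))) := by
      rw [← StrictAnti.range_inj (hanti lh hlh) (hanti lh' hlh')]
      have := congrArg Set.range heq
      rwa [σ.surjective.range_comp, σ'.surjective.range_comp] at this
    have h1 : lh = lh' := by
      funext j
      have := congrFun hr j
      simpa using this
    subst h1
    have h2 : σ = σ' := by
      ext i
      have := (hanti lh hlh).injective (congrFun heq i)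
      rw [this]
    rw [h2]
  · intro κ hκ
    obtain ⟨hκ1, hκ2⟩ := Finset.mem_filter.mp hκ
    set s : Equiv.Perm (Fin n) := Fin.revPerm.trans (Tuple.sort κ) with hs
    have hm : StrictMono (κ ∘ Tuple.sort κ) :=
      (Tuple.monotone_sort κ).strictMono_of_injective (hκ2.comp (Tuple.sort κ).injective)
    have ha : StrictAnti (κ ∘ s) := by
      intro i j hij
      have : (κ ∘ Tuple.sort κ) (Fin.rev j) < (κ ∘ Tuple.sort κ) (Fin.rev i) :=
        hm (Fin.rev_lt_rev.mpr hij)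
      simpa [hs] using this
    set a := κ ∘ s with hadef
    have hgap : ∀ d : ℕ, ∀ i j : Fin n, (j : ℕ) = i + d → a j + d ≤ a i := by
      intro d
      induction d with
      | zero => intro i j h; rw [show j = i from Fin.ext (by simpa using h)]; simp
      | succ d ih =>
        intro i j h
        have hj := j.2
        have h1 := ih i ⟨i + d, by omega⟩ rfl
        have h2 : a j < a ⟨i + d, by omega⟩ := ha (by rw [Fin.lt_def]; simp; omega)
        omega
    have hgap' : ∀ i j : Fin n, (i : ℕ) ≤ j → a j + ((j : ℕ) - i) ≤ a i := fun i j h =>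
      hgap _ i j (by omega)
    have hlow : ∀ j : Fin n, n - 1 - (j : ℕ) ≤ a j := fun j => by
      have := hgap' j ⟨n - 1, by omega⟩ (by have := j.2; simp; omega)
      simp only at this
      omega
    have hup : ∀ j : Fin n, a j + j < m + n := fun j => by
      have h1 := hgap' ⟨0, hn⟩ j (by simp)
      have h2 := Finset.mem_range.mp (Fintype.mem_piFinset.mp hκ1 (s ⟨0, hn⟩))
      simp only [hadef, Function.comp] at h1 h2 ⊢
      omega
    refine ⟨(fun j => a j - (n - 1 - (j : ℕ)), s⁻¹), ?_, ?_⟩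
    · refine Finset.mem_product.mpr ⟨Finset.mem_filter.mpr ⟨?_, ?_⟩, Finset.mem_univ _⟩
      · rw [Fintype.mem_piFinset]
        intro j
        have := hup j
        have := j.2
        simp only [Finset.mem_range]
        omega
      · intro i j hij
        have h1 := hgap' i j hij
        have h2 := hlow j
        have h3 := hlow i
        have h4 : (i : ℕ) ≤ j := hij
        have := j.2
        simp only
        omega
    · funext i
      have := hlow (s⁻¹ i)
      simp only [Function.comp]
      rw [Nat.sub_add_cancel this]
      simp [hadef]
  · intro x _
    rfl

theorem aux_vand_sq (n : ℕ) (x : Fin n → ℝ) : vand n x ^ 2 = (Matrix.vandermonde x).det ^ 2 := by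
  rw [Matrix.det_vandermonde, vand, ← Finset.prod_pow, ← Finset.prod_pow]
  refine Finset.prod_congr rfl fun j _ => ?_
  rw [← Finset.prod_pow, ← Finset.prod_pow]
  refine Finset.prod_congr (by ext; simp) fun k _ => ?_
  ring

theorem aux_vand_sq_perm (n : ℕ) (x : Fin n → ℝ) (σ : Equiv.Perm (Fin n)) :
    vand n (x ∘ σ) ^ 2 = vand n x ^ 2 := by
  rw [aux_vand_sq, aux_vand_sq]
  have : Matrix.vandermonde (x ∘ σ) = (Matrix.vandermonde x).submatrix σ id := by
    ext i j; simp [Matrix.vandermonde_apply]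
  rw [this, Matrix.det_permute, mul_pow]
  rcases Int.units_eq_one_or (Equiv.Perm.sign σ) with h | h <;> simp [h]

theorem aux_vand_zero (n : ℕ) (x : Fin n → ℝ) (h : ¬ Function.Injective x) :
    vand n x ^ 2 = 0 := by
  rw [aux_vand_sq, not_not.mp (mt Matrix.det_vandermonde_ne_zero_iff.mp h)]
  simp

theorem aux_msym_perm (n : ℕ) (lam : Fin n → ℕ) (x : Fin n → ℝ) (σ : Equiv.Perm (Fin n)) :
    msym n lam (x ∘ σ) = msym n lam x := by
  unfold msym
  refine Finset.sum_bij' (fun mu _ => mu ∘ σ.symm) (fun mu _ => mu ∘ σ) ?_ ?_ ?_ ?_ ?_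
  · intro mu hmu
    obtain ⟨τ, _, rfl⟩ := Finset.mem_image.mp hmu
    exact Finset.mem_image.mpr ⟨σ.symm.trans τ, Finset.mem_univ _, by ext; simp⟩
  · intro mu hmu
    obtain ⟨τ, _, rfl⟩ := Finset.mem_image.mp hmu
    exact Finset.mem_image.mpr ⟨σ.trans τ, Finset.mem_univ _, by ext; simp⟩
  · intro mu _; ext; simp
  · intro mu _; ext; simp
  · intro mu _
    rw [← Equiv.prod_comp σ (fun j => x j ^ (mu ∘ σ.symm) j)]
    simp

theorem aux_pSpace_perm (M n : ℕ) (f : (Fin n → ℝ) → ℝ) (hf : f ∈ pSpace M n)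
    (x : Fin n → ℝ) (σ : Equiv.Perm (Fin n)) : f (x ∘ σ) = f x := by
  induction hf using Submodule.span_induction with
  | mem f h => obtain ⟨lam, _, rfl⟩ := h; exact aux_msym_perm n lam x σ
  | zero => rfl
  | add f g _ _ h1 h2 => simp [h1, h2]
  | smul c f _ h => simp [h]

/-- The cubature over all index tuples holds for `F`. -/
def auxGood (n N : ℕ) (w : ℝ → ℝ) (x : ℕ → ℝ) (W : ℕ → ℝ) (F : (Fin n → ℝ) → ℝ) : Prop :=
  IntegrableOn (fun y : Fin n → ℝ => F y * ∏ j, w (y j)) (Set.univ.pi fun _ => Set.Ioo (-1 : ℝ) 1) ∧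
  ∫ y : Fin n → ℝ in Set.univ.pi (fun _ => Set.Ioo (-1 : ℝ) 1), F y * ∏ j, w (y j)
    = ∑ κ ∈ Fintype.piFinset (fun _ : Fin n => range N), F (x ∘ κ) * ∏ j, W (κ j)

theorem auxGood_mono (n N : ℕ) (w : ℝ → ℝ) (x : ℕ → ℝ) (W : ℕ → ℝ) (d : Fin n → ℕ) (D : ℕ)
    (hint : ∀ e < D, IntegrableOn (fun y : ℝ => y ^ e * w y) (Set.Ioo (-1) 1))
    (hq : ∀ e < D, ∫ y in Set.Ioo (-1 : ℝ) 1, y ^ e * w y = ∑ k ∈ range N, x k ^ e * W k)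
    (hd : ∀ j, d j < D) : auxGood n N w x W (fun y => ∏ j, y j ^ d j) := by
  unfold auxGood IntegrableOn
  rw [volume_pi, Measure.restrict_pi_pi]
  simp only [← Finset.prod_mul_distrib]
  constructor
  · exact Integrable.fintype_prod (f := fun j (y : ℝ) => y ^ d j * w y) fun j => hint _ (hd j)
  · rw [integral_fintype_prod_eq_prod (fun j (y : ℝ) => y ^ d j * w y)]
    simp only [hq _ (hd _)]
    rw [Finset.prod_univ_sum]
    rfl

theorem auxGood_add (n N : ℕ) (w : ℝ → ℝ) (x : ℕ → ℝ) (W : ℕ → ℝ) (F F' : (Fin n → ℝ) → ℝ)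
    (h : auxGood n N w x W F) (h' : auxGood n N w x W F') :
    auxGood n N w x W (fun y => F y + F' y) := by
  unfold auxGood at *
  simp only [add_mul]
  refine ⟨h.1.add h'.1, ?_⟩
  rw [integral_add h.1 h'.1, h.2, h'.2, Finset.sum_add_distrib]

theorem auxGood_smul (n N : ℕ) (w : ℝ → ℝ) (x : ℕ → ℝ) (W : ℕ → ℝ) (F : (Fin n → ℝ) → ℝ) (c : ℝ)
    (h : auxGood n N w x W F) : auxGood n N w x W (fun y => c * F y) := by
  unfold auxGood at *
  simp only [mul_assoc]
  refine ⟨h.1.const_mul c, ?_⟩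
  rw [integral_const_mul, h.2, Finset.mul_sum]

theorem auxGood_zero (n N : ℕ) (w : ℝ → ℝ) (x : ℕ → ℝ) (W : ℕ → ℝ) :
    auxGood n N w x W (fun _ => 0) := by
  unfold auxGood
  simp [IntegrableOn]

theorem auxGood_sum {ι : Type*} (n N : ℕ) (w : ℝ → ℝ) (x : ℕ → ℝ) (W : ℕ → ℝ) (s : Finset ι)
    (F : ι → (Fin n → ℝ) → ℝ)
    (h : ∀ i ∈ s, auxGood n N w x W (F i)) : auxGood n N w x W (fun y => ∑ i ∈ s, F i y) := by
  classical
  induction s using Finset.induction with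
  | empty => simpa using auxGood_zero n N w x W
  | insert a s ha ih =>
    simp only [Finset.sum_insert ha]
    exact auxGood_add _ _ _ _ _ _ _ (h a (by simp)) (ih fun i hi => h i (by simp [hi]))

theorem auxGood_main (n m : ℕ) (w : ℝ → ℝ) (x : ℕ → ℝ) (W : ℕ → ℝ)
    (hint : ∀ e < 2 * (m + n), IntegrableOn (fun y : ℝ => y ^ e * w y) (Set.Ioo (-1) 1))
    (hq : ∀ e < 2 * (m + n), ∫ y in Set.Ioo (-1 : ℝ) 1, y ^ e * w y
      = ∑ k ∈ range (m + n), x k ^ e * W k)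
    (f : (Fin n → ℝ) → ℝ) (hf : f ∈ pSpace (2 * m + 1) n) :
    auxGood n (m + n) w x W (fun y => f y * vand n y ^ 2) := by
  induction hf using Submodule.span_induction with
  | mem f h =>
    obtain ⟨lam, hlam, rfl⟩ := h
    have hlam' := Fintype.mem_piFinset.mp (Finset.mem_filter.mp hlam).1
    have e : (fun y => msym n lam y * vand n y ^ 2) = fun y =>
        ∑ mu ∈ Finset.univ.image (fun σ : Equiv.Perm (Fin n) => lam ∘ σ),
          ∑ σ : Equiv.Perm (Fin n), ∑ τ : Equiv.Perm (Fin n),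
            (((Equiv.Perm.sign σ : ℤ) : ℝ) * ((Equiv.Perm.sign τ : ℤ) : ℝ)) *
              ∏ j, y j ^ (mu j + (σ j : ℕ) + (τ j : ℕ)) := by
      funext y
      rw [aux_vand_sq, ← Matrix.det_transpose, Matrix.det_apply', msym, sq, Finset.sum_mul_sum,
        Finset.sum_mul]
      refine Finset.sum_congr rfl fun mu _ => ?_
      rw [Finset.mul_sum]
      refine Finset.sum_congr rfl fun σ _ => ?_
      rw [Finset.mul_sum]
      refine Finset.sum_congr rfl fun τ _ => ?_
      simp only [Matrix.transpose_apply, Matrix.vandermonde_apply, pow_add, Finset.prod_mul_distrib]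
      ring
    rw [e]
    refine auxGood_sum _ _ _ _ _ _ _ fun mu hmu => auxGood_sum _ _ _ _ _ _ _ fun σ _ =>
      auxGood_sum _ _ _ _ _ _ _ fun τ _ => auxGood_smul _ _ _ _ _ _ _
        (auxGood_mono _ _ _ _ _ _ (2 * (m + n)) hint hq ?_)
    intro j
    obtain ⟨ρ, _, rfl⟩ := Finset.mem_image.mp hmu
    have h1 := Finset.mem_range.mp (hlam' (ρ j))
    have h2 := (σ j).2
    have h3 := (τ j).2
    simp only [Function.comp]
    omega
  | zero => simpa using auxGood_zero n (m + n) w x W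
  | add f g _ _ h1 h2 =>
    simp only [Pi.add_apply, add_mul]
    exact auxGood_add _ _ _ _ _ _ _ h1 h2
  | smul c f _ h =>
    simp only [Pi.smul_apply, smul_eq_mul, mul_assoc]
    exact auxGood_smul _ _ _ _ _ _ _ h

theorem gauss_jacobi_cubature_JUE
    (n : ℕ) (hn : 0 < n) (m : ℕ)
    (α β : ℝ) (hα : -1 < α) (hβ : -1 < β)
    -- the normalized Jacobi polynomials p^{(α,β)}: orthonormal w.r.t. (1-x)^α (1+x)^β on (-1,1)
    (p : ℕ → Polynomial ℝ)
    (hdeg : ∀ l, (p l).degree = l)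
    (hlead : ∀ l, 0 < (p l).leadingCoeff)
    (horth : ∀ l k, (∫ x in Set.Ioo (-1 : ℝ) 1,
        (p l).eval x * (p k).eval x * ((1 - x) ^ α * (1 + x) ^ β))
      = if l = k then 1 else 0)
    -- the normalized Jacobi polynomials p^{(α+1,β+1)}
    (q : ℕ → Polynomial ℝ)
    (hqdeg : ∀ l, (q l).degree = l)
    (hqlead : ∀ l, 0 < (q l).leadingCoeff)
    (hqorth : ∀ l k, (∫ x in Set.Ioo (-1 : ℝ) 1,
        (q l).eval x * (q k).eval x * ((1 - x) ^ (α + 1) * (1 + x) ^ (β + 1)))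
      = if l = k then 1 else 0)
    -- the ordered roots of p^{(α,β)}_{m+n} in (-1,1)
    (xr : ℕ → ℝ)
    (hxr_mem : ∀ l < m + n, xr l ∈ Set.Ioo (-1 : ℝ) 1)
    (hxr_mono : ∀ k l : ℕ, k < l → l < m + n → xr k < xr l)
    (hxr_root : ∀ l < m + n, (p (m + n)).eval (xr l) = 0)
    -- a symmetric polynomial of degree at most 2m+1 in each variable
    (f : (Fin n → ℝ) → ℝ)
    (hf : f ∈ pSpace (2 * m + 1) n) :
    (1 / (n.factorial : ℝ)) *
      (∫ x : Fin n → ℝ in Set.univ.pi (fun _ => Set.Ioo (-1 : ℝ) 1),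
        f x * (∏ j, (1 - x j) ^ α * (1 + x j) ^ β) * vand n x ^ 2)
    = ∑ lh ∈ Lam m n,
        f (node n xr lh) *
          (((2 * m + 2 * n + 1 + α + β) / (((m : ℝ) + n) * ((m : ℝ) + n + 1 + α + β))) ^ n *
            (∏ j : Fin n, (1 - (xr (lh j + (n - 1 - (j : ℕ)))) ^ 2)⁻¹ *
              (((q (m + n - 1)).eval (xr (lh j + (n - 1 - (j : ℕ))))) ^ 2)⁻¹) *
            vand n (node n xr lh) ^ 2) := by
  have hint := aux_integrable α β p hdeg horth
  have hst := aux_stokes α β hα hβ hint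
  let L : Polynomial ℝ →ₗ[ℝ] ℝ :=
    { toFun := fun g => ∫ x in Set.Ioo (-1 : ℝ) 1, g.eval x * ((1 - x) ^ α * (1 + x) ^ β)
      map_add' := by
        intro g h
        simp only [Polynomial.eval_add, add_mul]
        exact integral_add (hint g) (hint h)
      map_smul' := by
        intro c g
        simp only [Polynomial.eval_smul, smul_eq_mul, mul_assoc, RingHom.id_apply]
        exact integral_const_mul _ _ }
  have hLdef : ∀ g : Polynomial ℝ,
      L g = ∫ x in Set.Ioo (-1 : ℝ) 1, g.eval x * ((1 - x) ^ α * (1 + x) ^ β) := fun g => rfl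
  have hLorth : ∀ l k, L (p l * p k) = if l = k then 1 else 0 := by
    intro l k
    rw [hLdef, ← horth l k]
    simp only [Polynomial.eval_mul]
  have hLqorth : ∀ l k, L ((1 - Polynomial.X ^ 2) * (q l * q k)) = if l = k then 1 else 0 := by
    intro l k
    rw [hLdef, ← hqorth l k]
    refine setIntegral_congr_fun measurableSet_Ioo fun x hx => ?_
    have h1 : 0 < 1 - x := by linarith [hx.2]
    have h2 : 0 < 1 + x := by linarith [hx.1]
    simp only [Polynomial.eval_mul, Polynomial.eval_sub, Polynomial.eval_one, Polynomial.eval_pow,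
      Polynomial.eval_X]
    rw [rpow_add_one h1.ne', rpow_add_one h2.ne']
    ring
  obtain ⟨M, hM⟩ : ∃ M, m + n = M + 1 := ⟨m + n - 1, by omega⟩
  have hMr : (m : ℝ) + n = M + 1 := by exact_mod_cast hM
  set K : ℝ := (2 * m + 2 * n + 1 + α + β) / (((m : ℝ) + n) * ((m : ℝ) + n + 1 + α + β)) with hK
  set W : ℕ → ℝ := fun k =>
    K * ((1 - xr k ^ 2)⁻¹ * (((q (m + n - 1)).eval (xr k)) ^ 2)⁻¹) with hW
  have hgauss : ∀ e < 2 * (m + n),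
      ∫ y in Set.Ioo (-1 : ℝ) 1, y ^ e * ((1 - y) ^ α * (1 + y) ^ β)
        = ∑ k ∈ range (m + n), xr k ^ e * W k := by
    intro e he
    have h := aux_gauss L p q hdeg hLorth hqdeg hLqorth α β hα hβ hst M xr
      (fun k l hkl hl => hxr_mono k l hkl (by omega))
      (fun l hl => by rw [← hM]; exact hxr_root l (by omega)) (Polynomial.X ^ e)
      (by rw [Polynomial.degree_X_pow]; exact_mod_cast (by omega))
    rw [hLdef] at h
    simp only [Polynomial.eval_pow, Polynomial.eval_X] at h
    rw [h, hM]
    refine Finset.sum_congr rfl fun k _ => ?_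
    simp only [hW, hK]
    rw [show m + n - 1 = M by omega, ← hMr]
    rw [show (2 * (m : ℝ) + 2 * n + 1 + α + β) = 2 * ((m : ℝ) + n) + 1 + α + β by ring]
  have hgood := auxGood_main n m (fun y => (1 - y) ^ α * (1 + y) ^ β) xr W
    (fun e _ => by simpa using hint (Polynomial.X ^ e)) hgauss f hf
  have hI := hgood.2
  have hcomm : ∀ x : Fin n → ℝ, f x * (∏ j, (1 - x j) ^ α * (1 + x j) ^ β) * vand n x ^ 2
      = f x * vand n x ^ 2 * ∏ j, ((1 - x j) ^ α * (1 + x j) ^ β) := fun x => by ring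
  simp only [hcomm]
  rw [hI, aux_sum_sort m n hn]
  · rw [← mul_assoc, one_div, inv_mul_cancel₀ (by positivity), one_mul]
    refine Finset.sum_congr rfl fun lh _ => ?_
    simp only [hW]
    rw [Finset.prod_mul_distrib (f := fun _ => K), Finset.prod_const, Finset.card_univ,
      Fintype.card_fin]
    change f (node n xr lh) * vand n (node n xr lh) ^ 2 * _ = _
    ring
  · intro κ σ
    simp only [Function.comp_apply]
    rw [← Function.comp_assoc, aux_pSpace_perm _ _ _ hf, aux_vand_sq_perm,
      Equiv.prod_comp σ (fun j => W (κ j))]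
  · intro κ hκ
    have : ¬ Function.Injective (xr ∘ κ) := fun h => hκ h.of_comp
    simp only
    rw [aux_vand_zero _ _ this]
    simp

end
end

section
/- Gauss–Chebyshev cubature with explicit Chebyshev nodes (Eqs. (9.2a)–(9.2b), the case d = 0 of Theorem 9.1): for ε_+, ε_− ∈ {0,1} and every f ∈ ℙ^{(2m+1,n)}, (1/((2π)^n n!)) ∫_0^π⋯∫_0^π f(cos ξ_1,…,cos ξ_n) ρ(ξ⃗) dξ_1⋯dξ_n = (2(m+n)+ε_++ε_−)^{−n} Σ_{λ̂ ∈ Λ^{(m,n)}} f(cos(ξ_λ̂^{(m,n)})) ρ(ξ_λ̂^{(m,n)}), where ρ(ξ⃗) := Π_{j=1}^n 2^{ε_++ε_−}(1+ε_+ cos ξ_j)(1−ε_− cos ξ_j) · Π_{1≤j<k≤n}(cos ξ_j − cos ξ_k)², and the node ξ_λ̂^{(m,n)} has j-th component ξ^{(m+n)}_{λ̂_j+n−j} with ξ^{(m+n)}_ℓ := π(ℓ+1/2+ε_−/2)/(m+n+ε_+/2+ε_−/2) for 0 ≤ ℓ < m+n. -/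
open MeasureTheory Real Finset

noncomputable section

/-- The Chebyshev points `ξ^{(N)}_ℓ = π(ℓ + 1/2 + ε₋/2)/(N + ε₊/2 + ε₋/2)`. -/
def chebNode (εp εm N : ℕ) (ℓ : ℕ) : ℝ :=
  π * ((ℓ : ℝ) + 1 / 2 + (εm : ℝ) / 2) / ((N : ℝ) + (εp : ℝ) / 2 + (εm : ℝ) / 2)

/-- The node with `j`-th component `ξ^{(m+n)}_{λ̂_j + n - j}`. -/
def chebNodeVec (εp εm m n : ℕ) (lh : Fin n → ℕ) : Fin n → ℝ :=
  fun j => chebNode εp εm (m + n) (lh j + (n - 1 - (j : ℕ)))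

/-- The circular Jacobi weight `ρ(ξ⃗)`. -/
def rhoCJ (εp εm n : ℕ) (ξv : Fin n → ℝ) : ℝ :=
  (∏ j : Fin n, 2 ^ (εp + εm) * (1 + εp * Real.cos (ξv j)) * (1 - εm * Real.cos (ξv j))) *
    ∏ j : Fin n, ∏ k ∈ Finset.univ.filter (fun k => j < k),
      (Real.cos (ξv j) - Real.cos (ξv k)) ^ 2


def cosSpan (K : ℕ) : Submodule ℝ (ℝ → ℝ) :=
  Submodule.span ℝ {g | ∃ k : ℕ, k ≤ K ∧ g = fun x => Real.cos (k * x)}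

lemma cosSpan_mono {K L : ℕ} (h : K ≤ L) : cosSpan K ≤ cosSpan L := by
  apply Submodule.span_mono
  rintro g ⟨k, hk, rfl⟩
  exact ⟨k, hk.trans h, rfl⟩

lemma cosSpan_cos_mul {K : ℕ} {g : ℝ → ℝ} (hg : g ∈ cosSpan K) :
    (fun x => Real.cos x * g x) ∈ cosSpan (K + 1) := by
  induction hg using Submodule.span_induction with
  | mem g hg =>
    obtain ⟨k, hk, rfl⟩ := hg
    rcases k with _ | k
    · refine Submodule.subset_span ⟨1, by omega, ?_⟩
      funext x; simp
    · have h1 : (fun x : ℝ => Real.cos ((k + 2 : ℕ) * x)) ∈ cosSpan (K + 1) :=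
        Submodule.subset_span ⟨k + 2, by omega, rfl⟩
      have h2 : (fun x : ℝ => Real.cos ((k : ℕ) * x)) ∈ cosSpan (K + 1) :=
        Submodule.subset_span ⟨k, by omega, rfl⟩
      have h3 := Submodule.smul_mem _ (1 / 2 : ℝ) (Submodule.add_mem _ h1 h2)
      convert h3 using 1
      funext x
      simp only [Pi.smul_apply, Pi.add_apply, smul_eq_mul]
      have e1 : ((k + 2 : ℕ) : ℝ) * x = ((k + 1 : ℕ) : ℝ) * x + x := by push_cast; ring
      have e2 : ((k : ℕ) : ℝ) * x = ((k + 1 : ℕ) : ℝ) * x - x := by push_cast; ring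
      rw [e1, e2, Real.cos_add, Real.cos_sub]
      ring
  | zero =>
    convert Submodule.zero_mem (cosSpan (K + 1)) using 1
    funext x; simp
  | add f g _ _ hf hg =>
    convert Submodule.add_mem _ hf hg using 1
    funext x; simp [mul_add]
  | smul c f _ hf =>
    convert Submodule.smul_mem _ c hf using 1
    funext x; simp; ring

lemma cosSpan_pow (a : ℕ) : (fun x => Real.cos x ^ a) ∈ cosSpan a := by
  induction a with
  | zero => exact Submodule.subset_span ⟨0, le_rfl, by funext x; simp⟩
  | succ a ih =>
    convert cosSpan_cos_mul ih using 1
    funext x; ring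

/-- one-dimensional weight -/
def wt (εp εm : ℕ) (x : ℝ) : ℝ :=
  2 ^ (εp + εm) * (1 + εp * Real.cos x) * (1 - εm * Real.cos x)

lemma cosSpan_lin {K : ℕ} {g : ℝ → ℝ} (hg : g ∈ cosSpan K) (ε : ℕ) (hε : ε = 0 ∨ ε = 1) (s : ℝ) :
    (fun x => g x * (1 + s * (ε * Real.cos x))) ∈ cosSpan (K + ε) := by
  rcases hε with rfl | rfl
  · simpa using hg
  · have := Submodule.add_mem _ (cosSpan_mono (Nat.le_succ K) hg)
      (Submodule.smul_mem _ s (cosSpan_cos_mul hg))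
    convert this using 1
    funext x; simp; ring

lemma cosSpan_wt (εp εm : ℕ) (hεp : εp = 0 ∨ εp = 1) (hεm : εm = 0 ∨ εm = 1) (a : ℕ) :
    (fun x => Real.cos x ^ a * wt εp εm x) ∈ cosSpan (a + εp + εm) := by
  have := Submodule.smul_mem _ ((2 : ℝ) ^ (εp + εm))
    (cosSpan_lin (cosSpan_lin (cosSpan_pow a) εp hεp 1) εm hεm (-1))
  convert this using 1
  funext x; simp [wt]; ring

lemma full_quad (M : ℕ) (c : ℝ) {K : ℕ} (hK : K < M) {g : ℝ → ℝ} (hg : g ∈ cosSpan K) :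
    Continuous g ∧ π * ∑ l ∈ range M, g (2 * π / M * l + c) = M * ∫ x in (0 : ℝ)..π, g x := by
  have hM : (0 : ℝ) < M := by exact_mod_cast (by omega : 0 < M)
  induction hg using Submodule.span_induction with
  | mem g hg =>
    obtain ⟨k, hk, rfl⟩ := hg
    refine ⟨by fun_prop, ?_⟩
    rcases Nat.eq_zero_or_pos k with rfl | hk0
    · simp; ring
    · have hk0' : (0 : ℝ) < k := by exact_mod_cast hk0
      have hkM : (k : ℝ) < M := by exact_mod_cast (by omega : k < M)
      have h := Real.sin_mul_sum_cos M (k * (2 * π / M)) (k * c)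
      have e1 : Real.sin (M * (k * (2 * π / M)) / 2) = 0 := by
        have : (M * (k * (2 * π / M)) / 2 : ℝ) = k * π := by field_simp
        rw [this, Real.sin_nat_mul_pi]
      have e2 : 0 < Real.sin (k * (2 * π / M) / 2) := by
        have : (k * (2 * π / M) / 2 : ℝ) = (k / M) * π := by field_simp
        rw [this]
        apply Real.sin_pos_of_pos_of_lt_pi
        · positivity
        · have : (k : ℝ) / M < 1 := by rw [div_lt_one hM]; exact hkM
          nlinarith [Real.pi_pos]
      have h0 : ∑ l ∈ range M, Real.cos (k * (2 * π / M * l + c)) = 0 := by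
        have h' := h
        simp only [e1, zero_mul] at h'
        rcases mul_eq_zero.1 h' with h | h
        · exact absurd h e2.ne'
        · rw [← h]; refine Finset.sum_congr rfl fun l _ => ?_
          congr 1; ring
      have h1 : ∫ x in (0 : ℝ)..π, Real.cos (k * x) = 0 := by
        rw [intervalIntegral.integral_comp_mul_left (fun x => Real.cos x) hk0'.ne']
        simp
      rw [h0, h1]; simp
  | zero => exact ⟨continuous_zero, by simp⟩
  | add f g _ _ hf hg =>
    refine ⟨hf.1.add hg.1, ?_⟩
    simp only [Pi.add_apply, Finset.sum_add_distrib]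
    rw [intervalIntegral.integral_add (hf.1.intervalIntegrable _ _) (hg.1.intervalIntegrable _ _),
      mul_add, mul_add, hf.2, hg.2]
  | smul a f _ hf =>
    refine ⟨hf.1.const_smul a, ?_⟩
    simp only [Pi.smul_apply, smul_eq_mul, ← Finset.mul_sum]
    rw [intervalIntegral.integral_const_mul]
    linear_combination a * hf.2

lemma chebNode_eq (εp εm N : ℕ) (hN : 0 < N) (l : ℕ) :
    chebNode εp εm N l = 2 * π / (2 * N + εp + εm : ℕ) * l + 
      2 * π / (2 * N + εp + εm : ℕ) * ((1 + εm) / 2) := by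
  unfold chebNode
  have : (0 : ℝ) < N := by exact_mod_cast hN
  push_cast
  field_simp
  ring

/-- the sum over the full circle is twice that over the half circle -/
lemma half_sum (εp εm N : ℕ) (hN : 0 < N) (hεp : εp = 0 ∨ εp = 1) (hεm : εm = 0 ∨ εm = 1)
    (a : ℕ) :
    ∑ l ∈ range (2 * N + εp + εm), (Real.cos (chebNode εp εm N l) ^ a *
        wt εp εm (chebNode εp εm N l))
      = 2 * ∑ l ∈ range N, (Real.cos (chebNode εp εm N l) ^ a *
        wt εp εm (chebNode εp εm N l)) := by
  have hN' : (0 : ℝ) < N := by exact_mod_cast hN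
  set F : ℕ → ℝ := fun l => Real.cos (chebNode εp εm N l) ^ a * wt εp εm (chebNode εp εm N l)
    with hF
  have e : 2 * N + εp + εm = (N + εp) + N + εm := by ring
  have h1 : ∑ l ∈ range εm, F ((N + εp) + N + l) = 0 := by
    rcases hεm with rfl | rfl
    · simp
    · have : chebNode εp 1 N ((N + εp) + N + 0) = 2 * π := by
        unfold chebNode; push_cast; field_simp; ring
      simp only [Finset.sum_range_one, hF, this, wt]
      simp
  have h2 : ∑ l ∈ range εp, F (N + l) = 0 := by
    rcases hεp with rfl | rfl
    · simp
    · have : chebNode 1 εm N (N + 0) = π := by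
        unfold chebNode; push_cast; field_simp; ring
      simp only [Finset.sum_range_one, hF, this, wt]
      simp
  have h3 : ∑ l ∈ range N, F (N + εp + l) = ∑ l ∈ range N, F l := by
    rw [← Finset.sum_range_reflect]
    refine Finset.sum_congr rfl fun l hl => ?_
    have hl : l < N := Finset.mem_range.1 hl
    have : chebNode εp εm N (N + εp + (N - 1 - l)) = 2 * π - chebNode εp εm N l := by
      have : ((N - 1 - l : ℕ) : ℝ) = N - 1 - l := by
        rw [Nat.cast_sub (by omega), Nat.cast_sub (by omega)]; simp
      unfold chebNode; push_cast; rw [this]; field_simp; ring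
    simp only [hF, this, wt, Real.cos_two_pi_sub]
  change ∑ l ∈ range (2 * N + εp + εm), F l = 2 * ∑ l ∈ range N, F l
  rw [e, Finset.sum_range_add, Finset.sum_range_add, Finset.sum_range_add, h1, h2, h3]
  ring

lemma quad_one (εp εm N : ℕ) (hN : 0 < N) (hεp : εp = 0 ∨ εp = 1) (hεm : εm = 0 ∨ εm = 1)
    (a : ℕ) (ha : a < 2 * N) :
    (∫ x in Set.Ioo 0 π, Real.cos x ^ a * wt εp εm x) =
      (2 * π / (2 * N + εp + εm)) * ∑ l ∈ range N, (Real.cos (chebNode εp εm N l) ^ a *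
        wt εp εm (chebNode εp εm N l)) := by
  have h := (full_quad (2 * N + εp + εm)
    (2 * π / (2 * N + εp + εm : ℕ) * ((1 + εm) / 2)) (K := a + εp + εm) (by omega)
    (cosSpan_wt εp εm hεp hεm a)).2
  simp only [← chebNode_eq εp εm N hN] at h
  rw [half_sum εp εm N hN hεp hεm a, intervalIntegral.integral_of_le Real.pi_pos.le,
    integral_Ioc_eq_integral_Ioo] at h
  have hN' : (0 : ℝ) < N := by exact_mod_cast hN
  push_cast at h
  field_simp
  linear_combination -h

def monoSpan (n D : ℕ) : Submodule ℝ ((Fin n → ℝ) → ℝ) :=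
  Submodule.span ℝ {F | ∃ d : Fin n → ℕ, (∀ j, d j ≤ D) ∧ F = fun x => ∏ j, x j ^ d j}

lemma monoSpan_mul {n A B : ℕ} {F G : (Fin n → ℝ) → ℝ} (hF : F ∈ monoSpan n A)
    (hG : G ∈ monoSpan n B) : F * G ∈ monoSpan n (A + B) := by
  have h := Submodule.mul_mem_mul hF hG
  unfold monoSpan at h
  rw [Submodule.span_mul_span] at h
  refine Submodule.span_mono ?_ h
  rintro _ ⟨_, ⟨d, hd, rfl⟩, _, ⟨e, he, rfl⟩, rfl⟩
  refine ⟨d + e, fun j => Nat.add_le_add (hd j) (he j), ?_⟩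
  funext x
  simp [pow_add, Finset.prod_mul_distrib]

lemma pSpace_le (D n : ℕ) : pSpace D n ≤ monoSpan n D := by
  unfold pSpace
  rw [Submodule.span_le]
  rintro _ ⟨lam, hlam, rfl⟩
  have : msym n lam = ∑ mu ∈ Finset.univ.image (fun σ : Equiv.Perm (Fin n) => lam ∘ σ),
      fun x : Fin n → ℝ => ∏ j : Fin n, x j ^ mu j := by
    funext x; simp [msym]
  rw [this]
  refine Submodule.sum_mem _ fun mu hmu => Submodule.subset_span ⟨mu, ?_, rfl⟩
  obtain ⟨σ, -, rfl⟩ := Finset.mem_image.1 hmu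
  intro j
  have h := (Finset.mem_filter.1 (Finset.mem_coe.1 hlam)).1
  have := Fintype.mem_piFinset.1 h (σ j)
  have := Finset.mem_range.1 this
  simp only [Function.comp]
  omega

lemma pSpace_symm {D n : ℕ} {f : (Fin n → ℝ) → ℝ} (hf : f ∈ pSpace D n)
    (σ : Equiv.Perm (Fin n)) (x : Fin n → ℝ) : f (x ∘ σ) = f x := by
  induction hf using Submodule.span_induction with
  | mem g hg =>
    obtain ⟨lam, -, rfl⟩ := hg
    unfold msym
    refine Finset.sum_bij' (fun mu _ => mu ∘ σ.symm) (fun mu _ => mu ∘ σ) ?_ ?_ ?_ ?_ ?_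
    · intro mu hmu
      obtain ⟨τ, -, rfl⟩ := Finset.mem_image.1 hmu
      exact Finset.mem_image.2 ⟨σ.symm.trans τ, Finset.mem_univ _, by funext j; simp⟩
    · intro mu hmu
      obtain ⟨τ, -, rfl⟩ := Finset.mem_image.1 hmu
      exact Finset.mem_image.2 ⟨σ.trans τ, Finset.mem_univ _, by funext j; simp⟩
    · intro mu _; funext j; simp
    · intro mu _; funext j; simp
    · intro mu _
      rw [← Equiv.prod_comp σ (fun j => x j ^ (mu ∘ σ.symm) j)]
      simp
  | zero => rfl
  | add f g _ _ hf hg => simp [hf, hg]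
  | smul c f _ hf => simp [hf]

lemma vand_mem (n : ℕ) :
    (fun x : Fin n → ℝ => (Matrix.vandermonde x).det) ∈ monoSpan n (n - 1) := by
  have : (fun x : Fin n → ℝ => (Matrix.vandermonde x).det) =
      ∑ σ : Equiv.Perm (Fin n), ((Equiv.Perm.sign σ : ℤ) : ℝ) •
        fun x : Fin n → ℝ => ∏ j, x j ^ ((σ.symm j : Fin n) : ℕ) := by
    funext x
    rw [Matrix.det_apply', Finset.sum_apply]
    refine Finset.sum_congr rfl fun σ _ => ?_
    simp only [Pi.smul_apply, smul_eq_mul, Matrix.vandermonde_apply]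
    congr 1
    rw [← Equiv.prod_comp σ (fun j => x j ^ ((σ.symm j : Fin n) : ℕ))]
    simp
  rw [this]
  refine Submodule.sum_mem _ fun σ _ => Submodule.smul_mem _ _
    (Submodule.subset_span ⟨fun j => σ.symm j, fun j => ?_, rfl⟩)
  have := (σ.symm j).2
  show ((σ.symm j : Fin n) : ℕ) ≤ n - 1
  omega

lemma vand_symm {n : ℕ} (σ : Equiv.Perm (Fin n)) (x : Fin n → ℝ) :
    (Matrix.vandermonde (x ∘ σ)).det ^ 2 = (Matrix.vandermonde x).det ^ 2 := by
  have : Matrix.vandermonde (x ∘ σ) = (Matrix.vandermonde x).submatrix σ id := by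
    ext i j; simp [Matrix.vandermonde_apply]
  rw [this, Matrix.det_permute, mul_pow]
  have : (((Equiv.Perm.sign σ : ℤˣ) : ℤ) : ℝ) ^ 2 = 1 := by
    rcases Int.units_eq_one_or (Equiv.Perm.sign σ) with h | h <;> simp [h]
  rw [this, one_mul]

lemma rho_eq (εp εm n : ℕ) (ξv : Fin n → ℝ) :
    rhoCJ εp εm n ξv = (Matrix.vandermonde (fun j => Real.cos (ξv j))).det ^ 2 *
      ∏ j, wt εp εm (ξv j) := by
  unfold rhoCJ wt
  rw [mul_comm, Matrix.det_vandermonde, ← Finset.prod_pow]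
  congr 1
  refine Finset.prod_congr rfl fun j _ => ?_
  rw [← Finset.prod_pow]
  refine Finset.prod_congr (by ext k; simp) fun k _ => by ring

lemma wt_cont (εp εm : ℕ) : Continuous (wt εp εm) := by
  unfold wt; fun_prop

lemma cub_prod (εp εm N n : ℕ) (hN : 0 < N) (hεp : εp = 0 ∨ εp = 1) (hεm : εm = 0 ∨ εm = 1)
    {D : ℕ} (hD : D < 2 * N) {F : (Fin n → ℝ) → ℝ} (hF : F ∈ monoSpan n D) :
    Continuous F ∧
    (∫ ξv : Fin n → ℝ in Set.univ.pi (fun _ => Set.Ioo 0 π),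
        F (fun j => Real.cos (ξv j)) * ∏ j, wt εp εm (ξv j)) =
      (2 * π / (2 * N + εp + εm)) ^ n * ∑ l ∈ Fintype.piFinset fun _ : Fin n => range N,
        F (fun j => Real.cos (chebNode εp εm N (l j))) *
          ∏ j, wt εp εm (chebNode εp εm N (l j)) := by
  have hw := wt_cont εp εm
  have hint : ∀ G : (Fin n → ℝ) → ℝ, Continuous G → IntegrableOn
      (fun ξv : Fin n → ℝ => G (fun j => Real.cos (ξv j)) * ∏ j, wt εp εm (ξv j))
      (Set.univ.pi (fun _ => Set.Ioo 0 π)) volume := by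
    intro G hG
    have hc : Continuous (fun ξv : Fin n → ℝ =>
        G (fun j => Real.cos (ξv j)) * ∏ j, wt εp εm (ξv j)) := by fun_prop
    refine (hc.continuousOn.integrableOn_compact
      (isCompact_univ_pi fun _ : Fin n => isCompact_Icc (a := (0 : ℝ)) (b := π))).mono_set ?_
    exact Set.pi_mono fun _ _ => Set.Ioo_subset_Icc_self
  induction hF using Submodule.span_induction with
  | mem F hF =>
    obtain ⟨d, hd, rfl⟩ := hF
    refine ⟨by fun_prop, ?_⟩
    simp only [← Finset.prod_mul_distrib]
    rw [volume_pi, Measure.restrict_pi_pi]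
    rw [integral_fintype_prod_eq_prod (fun j x => Real.cos x ^ d j * wt εp εm x)]
    rw [← Finset.prod_univ_sum (fun _ => range N) (fun j l =>
      Real.cos (chebNode εp εm N l) ^ d j * wt εp εm (chebNode εp εm N l))]
    rw [Finset.prod_congr rfl fun j _ => quad_one εp εm N hN hεp hεm (d j) ((hd j).trans_lt hD)]
    rw [Finset.prod_mul_distrib, Finset.prod_const, Finset.card_univ, Fintype.card_fin]
  | zero => exact ⟨continuous_zero, by simp⟩
  | add F G _ _ hF hG =>
    refine ⟨hF.1.add hG.1, ?_⟩
    simp only [Pi.add_apply, add_mul, Finset.sum_add_distrib]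
    rw [integral_add (hint F hF.1) (hint G hG.1), hF.2, hG.2]
    ring
  | smul c F _ hF =>
    refine ⟨hF.1.const_smul c, ?_⟩
    simp only [Pi.smul_apply, smul_eq_mul, mul_assoc, ← Finset.mul_sum]
    rw [integral_const_mul, hF.2]
    ring

/-- sum over all tuples reduces to the alcove -/
lemma sum_alcove (m n : ℕ) (G : (Fin n → ℕ) → ℝ)
    (hsymm : ∀ (σ : Equiv.Perm (Fin n)) l, G (l ∘ σ) = G l)
    (hzero : ∀ l, ¬ Function.Injective l → G l = 0) :
    ∑ l ∈ Fintype.piFinset (fun _ : Fin n => range (m + n)), G l =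
      n.factorial * ∑ lh ∈ Lam m n, G (fun j => lh j + (n - 1 - (j : ℕ))) := by
  classical
  have hanti : ∀ lh ∈ Lam m n, StrictAnti (fun j : Fin n => lh j + (n - 1 - (j : ℕ))) := by
    intro lh hlh i j hij
    have h := (Finset.mem_filter.1 hlh).2 i j hij.le
    have h1 : (i : ℕ) < j := hij
    have := j.2
    show lh j + (n - 1 - (j : ℕ)) < lh i + (n - 1 - (i : ℕ))
    omega
  rw [← Finset.sum_filter_of_ne (p := Function.Injective)
    (fun l _ h => by by_contra h'; exact h (hzero l h'))]
  have h1 : (n.factorial : ℝ) * ∑ lh ∈ Lam m n, G (fun j => lh j + (n - 1 - (j : ℕ))) =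
      ∑ p ∈ Lam m n ×ˢ (Finset.univ : Finset (Equiv.Perm (Fin n))),
        G ((fun j => p.1 j + (n - 1 - (j : ℕ))) ∘ p.2) := by
    rw [Finset.sum_product, Finset.mul_sum]
    refine Finset.sum_congr rfl fun lh _ => ?_
    simp [hsymm, Fintype.card_perm]
  rw [h1]
  symm
  refine Finset.sum_bij (fun p _ => (fun j => p.1 j + (n - 1 - (j : ℕ))) ∘ p.2) ?_ ?_ ?_ ?_
  · rintro ⟨lh, σ⟩ hp
    have hlh := (Finset.mem_product.1 hp).1
    refine Finset.mem_filter.2 ⟨Fintype.mem_piFinset.2 fun j => Finset.mem_range.2 ?_,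
      (hanti lh hlh).injective.comp σ.injective⟩
    have h : lh (σ j) < m + 1 :=
      Finset.mem_range.1 (Fintype.mem_piFinset.1 (Finset.mem_filter.1 hlh).1 (σ j))
    have := j.2
    have := (σ j).2
    show lh (σ j) + (n - 1 - (σ j : ℕ)) < m + n
    omega
  · rintro ⟨lh, σ⟩ hp ⟨lh', σ'⟩ hp' h
    have ha := hanti lh (Finset.mem_product.1 hp).1
    have ha' := hanti lh' (Finset.mem_product.1 hp').1
    simp only at h
    have hr := congrArg Set.range h
    rw [σ.surjective.range_comp, σ'.surjective.range_comp] at hr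
    have he := (ha.range_inj ha').1 hr
    have hl : lh = lh' := by
      funext j
      have := congrFun he j
      simpa using this
    subst hl
    have hs : σ = σ' := by
      ext1 j
      exact ha.injective (congrFun h j)
    rw [hs]
  · intro l hl
    obtain ⟨hl1, hinj⟩ := Finset.mem_filter.1 hl
    have hl2 : ∀ j, l j < m + n := fun j => Finset.mem_range.1 (Fintype.mem_piFinset.1 hl1 j)
    let τ := Tuple.sort (fun j => OrderDual.toDual (l j))
    have hτ : Antitone (l ∘ τ) := fun i j hij =>
      OrderDual.toDual_le_toDual.1 (Tuple.monotone_sort (fun j => OrderDual.toDual (l j)) hij)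
    have hτs : StrictAnti (l ∘ τ) := hτ.strictAnti_of_injective (hinj.comp τ.injective)
    -- lower bound
    have hlow : ∀ k : ℕ, ∀ i j : Fin n, (i : ℕ) + k = j → l (τ j) + k ≤ l (τ i) := by
      intro k
      induction k with
      | zero => intro i j h; rw [show i = j from Fin.ext h]; simp
      | succ k ih =>
        intro i j h
        have hj := j.2
        have h1 := ih i ⟨i + k, by omega⟩ rfl
        have h2 : l (τ j) < l (τ ⟨i + k, by omega⟩) :=
          hτs (show (⟨i + k, by omega⟩ : Fin n) < j from Fin.lt_def.2 (by simp; omega))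
        omega
    have hb : ∀ j : Fin n, n - 1 - (j : ℕ) ≤ l (τ j) := fun j => by
      have hj := j.2
      have := hlow (n - 1 - j) j ⟨n - 1, by omega⟩ (by simp; omega)
      omega
    refine ⟨⟨fun j => l (τ j) - (n - 1 - (j : ℕ)), τ.symm⟩, Finset.mem_product.2
      ⟨Finset.mem_filter.2 ⟨Fintype.mem_piFinset.2 fun j => Finset.mem_range.2 ?_, ?_⟩,
        Finset.mem_univ _⟩, ?_⟩
    · have hj := j.2
      have h1 := hlow j ⟨0, by omega⟩ j (by simp)
      have h2 := hl2 (τ ⟨0, by omega⟩)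
      show l (τ j) - (n - 1 - (j : ℕ)) < m + 1
      omega
    · intro i j hij
      have h1 : (i : ℕ) ≤ j := hij
      have h2 := hlow (j - i) i j (by omega)
      have h3 := hb j
      have := j.2
      show l (τ j) - (n - 1 - (j : ℕ)) ≤ l (τ i) - (n - 1 - (i : ℕ))
      omega
    · funext j
      have := hb (τ.symm j)
      simp only [Function.comp, Equiv.apply_symm_apply] at this ⊢
      omega
  · intro p _; rfl

theorem gauss_chebyshev_cubature_explicit_nodes
    (εp εm : ℕ) (hεp : εp = 0 ∨ εp = 1) (hεm : εm = 0 ∨ εm = 1)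
    (n : ℕ) (hn : 0 < n) (m : ℕ)
    -- a symmetric polynomial of degree at most 2m+1 in each variable
    (f : (Fin n → ℝ) → ℝ)
    (hf : f ∈ pSpace (2 * m + 1) n) :
    (1 / ((2 * π) ^ n * (n.factorial : ℝ))) *
      (∫ ξv : Fin n → ℝ in Set.univ.pi (fun _ => Set.Ioo 0 π),
        f (fun j => Real.cos (ξv j)) * rhoCJ εp εm n ξv)
    = ((2 * ((m : ℝ) + n) + εp + εm) ^ n)⁻¹ *
        ∑ lh ∈ Lam m n,
          f (fun j => Real.cos (chebNodeVec εp εm m n lh j)) *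
            rhoCJ εp εm n (chebNodeVec εp εm m n lh) := by
  have hN : 0 < m + n := by omega
  have hmem : f * ((fun x : Fin n → ℝ => (Matrix.vandermonde x).det) *
      (fun x : Fin n → ℝ => (Matrix.vandermonde x).det)) ∈
        monoSpan n ((2 * m + 1) + ((n - 1) + (n - 1))) :=
    monoSpan_mul (pSpace_le _ _ hf) (monoSpan_mul (vand_mem n) (vand_mem n))
  have h := (cub_prod εp εm (m + n) n hN hεp hεm (by omega) hmem).2
  have hint : ∀ ξv : Fin n → ℝ, (f * ((fun x : Fin n → ℝ => (Matrix.vandermonde x).det) *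
      (fun x : Fin n → ℝ => (Matrix.vandermonde x).det))) (fun j => Real.cos (ξv j)) *
        ∏ j, wt εp εm (ξv j) = f (fun j => Real.cos (ξv j)) * rhoCJ εp εm n ξv := by
    intro ξv
    rw [rho_eq]
    simp only [Pi.mul_apply]
    ring
  simp only [hint] at h
  rw [h, sum_alcove m n (fun l => f (fun j => Real.cos (chebNode εp εm (m + n) (l j))) *
          rhoCJ εp εm n (fun j => chebNode εp εm (m + n) (l j)))]
  · have hfac : (n.factorial : ℝ) ≠ 0 := by exact_mod_cast n.factorial_ne_zero
    have hpi : (2 * π) ^ n ≠ 0 := by positivity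
    have hn' : (0 : ℝ) < n := by exact_mod_cast hn
    have hM : (2 * ((m : ℝ) + n) + εp + εm) ^ n ≠ 0 := by positivity
    unfold chebNodeVec
    push_cast
    rw [div_pow]
    field_simp
  · intro σ l
    have h1 := pSpace_symm hf σ (fun j => Real.cos (chebNode εp εm (m + n) (l j)))
    have h2 := vand_symm σ (fun j => Real.cos (chebNode εp εm (m + n) (l j)))
    have h3 := Equiv.prod_comp σ (fun j => wt εp εm (chebNode εp εm (m + n) (l j)))
    simp only [rho_eq]
    simp only [Function.comp_def] at h1 h2 ⊢
    rw [h1, h2, h3]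
  · intro l hl
    simp only [rho_eq]
    have : (Matrix.vandermonde (fun j => Real.cos (chebNode εp εm (m + n) (l j)))).det = 0 := by
      rw [Matrix.det_vandermonde_eq_zero_iff]
      simp only [Function.Injective, not_forall] at hl
      obtain ⟨i, j, hij, hne⟩ := hl
      exact ⟨i, j, by simp only [hij], hne⟩
    rw [this]; simp

end
end
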